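/- Let n ≥ 1 and ζ_1, …, ζ_n ∈ ℂ. Then the recursively defined Laurent polynomial x^{(n)}(ζ_1, …, ζ_n) equals the singular part (the sum of all strictly negative-degree terms) of δ_n^{−1}·β_n computed in the field ℂ((z)) of formal Laurent series, where M_n(ζ) = (α_n, β_n; γ_n, δ_n) and δ_n is invertible in ℂ((z)) because its constant term equals 1. -/

import Mathlib

open Matrix

/-- The singular part `(f)₋` of a Laurent series: the sum of its strictly
negative-degree terms. -/
noncomputable def singPart (f : LaurentSeries ℂ) : LaurentSeries ℂ where
  coeff k := if k < 0 then f.coeff k else 0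
  isPWO_support' := by
    apply f.isPWO_support'.mono
    intro k hk
    simp only [Function.mem_support] at hk ⊢
    by_cases h : k < 0
    · simpa [h] using hk
    · simp [h] at hk

/-- The recursively defined Laurent polynomials `x⁽ᵏ⁾(ζ₁, …, ζ_k)`:
`x⁽¹⁾ = ζ₁ z⁻¹` and
`x⁽ᵏ⁺¹⁾ = ((1+|ζ_{k+1}|²) Σ_{p=0}^k conj(ζ_{k+1})^p (x⁽ᵏ⁾)^{p+1} z^{p(k+1)})₋ + ζ_{k+1} z^{−k−1}`
(`ζ` is indexed starting at `1`; the base case is subsumed via `x⁽⁰⁾ = 0`). -/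
noncomputable def xrec (ζ : ℕ → ℂ) : ℕ → LaurentSeries ℂ
  | 0 => 0
  | m + 1 =>
      singPart (HahnSeries.single (0 : ℤ) (((1 + ‖ζ (m + 1)‖ ^ 2 : ℝ) : ℂ)) *
          ∑ p ∈ Finset.range (m + 1),
            HahnSeries.single (0 : ℤ) ((starRingEnd ℂ (ζ (m + 1))) ^ p) *
              xrec ζ m ^ (p + 1) * HahnSeries.single ((p : ℤ) * ((m : ℤ) + 1)) 1)
        + HahnSeries.single (-(m : ℤ) - 1) (ζ (m + 1))

/-- The factor `(1, ζ_j z^{-j}; −conj(ζ_j) z^{j}, 1)`. -/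
noncomputable def factor (j : ℕ) (c : ℂ) : Matrix (Fin 2) (Fin 2) (LaurentSeries ℂ) :=
  !![1, HahnSeries.single (-(j : ℤ)) c;
     HahnSeries.single ((j : ℤ)) (-(starRingEnd ℂ c)), 1]

/-- `M_n(ζ)`: the product of the factors for `j = n, n−1, …, 1`, the `j = n` factor leftmost. -/
noncomputable def Mmat (ζ : ℕ → ℂ) : ℕ → Matrix (Fin 2) (Fin 2) (LaurentSeries ℂ)
  | 0 => 1
  | k + 1 => factor (k + 1) (ζ (k + 1)) * Mmat ζ k

/-- `f` has order at least `d`. -/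
def OrdGe (d : ℤ) (f : LaurentSeries ℂ) : Prop := ∀ k < d, f.coeff k = 0

theorem ordGe_iff {d : ℤ} {f : LaurentSeries ℂ} : OrdGe d f ↔ (d : WithTop ℤ) ≤ f.orderTop := by
  rw [HahnSeries.le_orderTop_iff_forall]
  constructor
  · intro h k hk
    exact h k (WithTop.coe_lt_coe.mp hk)
  · intro h k hk
    exact h k (WithTop.coe_lt_coe.mpr hk)

theorem OrdGe.mono {d e : ℤ} {f : LaurentSeries ℂ} (h : OrdGe d f) (hde : e ≤ d) : OrdGe e f :=
  fun k hk => h k (lt_of_lt_of_le hk hde)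

theorem OrdGe.add {d : ℤ} {f g : LaurentSeries ℂ} (hf : OrdGe d f) (hg : OrdGe d g) :
    OrdGe d (f + g) := fun k hk => by
  rw [HahnSeries.coeff_add, hf k hk, hg k hk, add_zero]

theorem OrdGe.sub {d : ℤ} {f g : LaurentSeries ℂ} (hf : OrdGe d f) (hg : OrdGe d g) :
    OrdGe d (f - g) := fun k hk => by
  rw [HahnSeries.coeff_sub, hf k hk, hg k hk, sub_zero]

theorem OrdGe.mul {d e : ℤ} {f g : LaurentSeries ℂ} (hf : OrdGe d f) (hg : OrdGe e g) :
    OrdGe (d + e) (f * g) := by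
  rw [ordGe_iff] at *
  rw [WithTop.coe_add]
  exact (add_le_add hf hg).trans HahnSeries.orderTop_add_le_mul

theorem ordGe_single (d : ℤ) (c : ℂ) : OrdGe d (HahnSeries.single d c) :=
  fun _ hk => HahnSeries.coeff_single_of_ne hk.ne

theorem ordGe_one : OrdGe 0 (1 : LaurentSeries ℂ) := ordGe_single 0 1

theorem OrdGe.pow {d : ℤ} {f : LaurentSeries ℂ} (hf : OrdGe d f) (n : ℕ) :
    OrdGe (n * d) (f ^ n) := by
  induction n with
  | zero => simpa using ordGe_one
  | succ n ih =>
    rw [pow_succ]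
    exact (ih.mul hf).mono (by push_cast; linarith)

/-- `f` is one plus positive-degree terms. -/
def IsUni (f : LaurentSeries ℂ) : Prop := OrdGe 1 (f - 1)

theorem IsUni.coeff {f : LaurentSeries ℂ} (h : IsUni f) : f.coeff 0 = 1 := by
  have := h 0 one_pos
  rw [HahnSeries.coeff_sub, HahnSeries.coeff_one] at this
  simpa [sub_eq_zero] using this

theorem IsUni.ne {f : LaurentSeries ℂ} (h : IsUni f) : f ≠ 0 := by
  rintro rfl
  simpa using h.coeff

theorem IsUni.ordGe {f : LaurentSeries ℂ} (h : IsUni f) : OrdGe 0 f := by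
  have := (h.mono zero_le_one).add ordGe_one
  simpa using this

theorem IsUni.mul {f g : LaurentSeries ℂ} (hf : IsUni f) (hg : IsUni g) : IsUni (f * g) := by
  have h := OrdGe.mul hf hg.ordGe
  have h2 := OrdGe.add h hg
  have e : (f - 1) * g + (g - 1) = f * g - 1 := by ring
  rw [e] at h2
  exact h2

theorem isUni_one_sub {t : LaurentSeries ℂ} (h : OrdGe 1 t) : IsUni (1 - t) := by
  have h2 : OrdGe 1 (0 - t) := OrdGe.sub (fun _ _ => rfl) h
  have e : 0 - t = 1 - t - 1 := by ring
  rw [e] at h2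
  exact h2

theorem IsUni.inv {f : LaurentSeries ℂ} (h : IsUni f) : OrdGe 0 f⁻¹ := by
  have h0 : f.orderTop ≤ 0 :=
    HahnSeries.orderTop_le_of_coeff_ne_zero (g := (0 : ℤ)) (by rw [h.coeff]; exact one_ne_zero)
  have h1 : f.orderTop + f⁻¹.orderTop = 0 := by
    rw [← HahnSeries.orderTop_mul, mul_inv_cancel₀ h.ne, HahnSeries.orderTop_one]
  rw [ordGe_iff]
  calc ((0 : ℤ) : WithTop ℤ) = f.orderTop + f⁻¹.orderTop := h1.symm
    _ ≤ 0 + f⁻¹.orderTop := add_le_add_left h0 _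
    _ = _ := zero_add _

theorem singPart_congr {f g : LaurentSeries ℂ} (h : OrdGe 0 (f - g)) :
    singPart f = singPart g := by
  ext k
  simp only [singPart]
  split_ifs with hk
  · exact sub_eq_zero.mp (by simpa using h k hk)
  · rfl

theorem singPart_add (f g : LaurentSeries ℂ) :
    singPart (f + g) = singPart f + singPart g := by
  ext k
  simp only [singPart, HahnSeries.coeff_add]
  split_ifs <;> simp

theorem singPart_single {d : ℤ} (hd : d < 0) (c : ℂ) :
    singPart (HahnSeries.single d c) = HahnSeries.single d c := by
  ext k
  simp only [singPart]
  split_ifs with hk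
  · rfl
  · rw [HahnSeries.coeff_single_of_ne]
    omega

theorem sub_singPart (f : LaurentSeries ℂ) : OrdGe 0 (f - singPart f) := by
  intro k hk
  simp [singPart, hk]

theorem geom_aux (u x : LaurentSeries ℂ) (N : ℕ) :
    (∑ p ∈ Finset.range N, u ^ p * x ^ (p + 1)) * (1 - u * x) = x - u ^ N * x ^ (N + 1) := by
  induction N with
  | zero => simp
  | succ N ih =>
    rw [Finset.sum_range_succ, add_mul, ih]
    ring

theorem main_aux (ζ : ℕ → ℂ) (n : ℕ) :
    OrdGe (-(n : ℤ)) ((Mmat ζ n) 0 1) ∧ IsUni ((Mmat ζ n) 1 1) ∧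
    xrec ζ n = singPart (((Mmat ζ n) 1 1)⁻¹ * (Mmat ζ n) 0 1) := by
  induction n with
  | zero =>
    refine ⟨?_, ?_, ?_⟩
    · intro k _
      simp [Mmat]
    · intro k _
      simp [Mmat]
    · ext k
      simp [Mmat, xrec, singPart]
  | succ m ih =>
    obtain ⟨hβ, hδ, hx⟩ := ih
    set β := (Mmat ζ m) 0 1 with hβd
    set δ := (Mmat ζ m) 1 1 with hδd
    set x := xrec ζ m with hxd
    set c := ζ (m + 1) with hc
    set u : LaurentSeries ℂ := HahnSeries.single ((m : ℤ) + 1) (starRingEnd ℂ c) with hu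
    set v : LaurentSeries ℂ := HahnSeries.single (-(m : ℤ) - 1) c with hv
    have e1 : (Mmat ζ (m + 1)) 0 1 = β + v * δ := by
      have : -((m + 1 : ℕ) : ℤ) = -(m : ℤ) - 1 := by push_cast; ring
      simp only [Mmat, factor, Matrix.mul_apply, Fin.sum_univ_two, this]
      simp [hβd, hδd, hv, hc]
    have e2 : (Mmat ζ (m + 1)) 1 1 = δ - u * β := by
      have : ((m + 1 : ℕ) : ℤ) = (m : ℤ) + 1 := by push_cast; ring
      simp only [Mmat, factor, Matrix.mul_apply, Fin.sum_univ_two, this]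
      simp [hβd, hδd, hu, hc]
      ring
    set w := δ⁻¹ * β with hw
    have hwO : OrdGe (-(m : ℤ)) w := (hδ.inv.mul hβ).mono (by simp)
    have hβw : β = δ * w := by rw [hw, mul_inv_cancel_left₀ hδ.ne]
    have hy : OrdGe 0 (w - x) := by rw [hx]; exact sub_singPart w
    have hxO : OrdGe (-(m : ℤ)) x := by
      have := hwO.sub (hy.mono (by omega : -(m : ℤ) ≤ 0))
      simpa using this
    have huO : OrdGe ((m : ℤ) + 1) u := ordGe_single _ _
    have hvO : OrdGe (-(m : ℤ) - 1) v := ordGe_single _ _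
    have hUw : IsUni (1 - u * w) := isUni_one_sub ((huO.mul hwO).mono (by linarith))
    have hUx : IsUni (1 - u * x) := isUni_one_sub ((huO.mul hxO).mono (by linarith))
    have e2' : δ - u * β = δ * (1 - u * w) := by rw [hβw]; ring
    rw [e1, e2]
    refine ⟨?_, ?_, ?_⟩
    · push_cast
      exact (hβ.mono (by linarith)).add ((hvO.mul hδ.ordGe).mono (by linarith))
    · rw [e2']
      exact hδ.mul hUw
    · set A : LaurentSeries ℂ := HahnSeries.single (0 : ℤ) (((1 + ‖c‖ ^ 2 : ℝ) : ℂ)) with hA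
      have hAO : OrdGe 0 A := ordGe_single _ _
      have hAv : A = 1 + v * u := by
        rw [hA, hv, hu, HahnSeries.single_mul_single, Complex.mul_conj, Complex.normSq_eq_norm_sq]
        have : -(m : ℤ) - 1 + (m + 1) = 0 := by ring
        rw [this]
        push_cast
        rw [HahnSeries.single_add]
        rfl
      set S := ∑ p ∈ Finset.range (m + 1), u ^ p * x ^ (p + 1) with hS
      have hxr : xrec ζ (m + 1) = singPart (A * S) + v := by
        rw [xrec]
        congr 3
        refine Finset.sum_congr rfl fun p _ => ?_
        rw [hu, HahnSeries.single_pow, mul_right_comm, HahnSeries.single_mul_single]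
        simp [hxd, hc]
      have hg := geom_aux u x (m + 1)
      rw [← hS] at hg
      have hwq : (δ - u * β)⁻¹ * (β + v * δ) = A * (w * (1 - u * w)⁻¹) + v := by
        rw [e2', hβw, hAv]
        have h1 := hδ.ne
        have h2 := hUw.ne
        field_simp
        ring
      rw [hxr, hwq, singPart_add, singPart_single (by omega)]
      congr 1
      apply singPart_congr
      have hkey : A * S - A * (w * (1 - u * w)⁻¹) =
          A * (((x - w) - u ^ (m + 1) * x ^ (m + 1 + 1) * (1 - u * w)) *
            ((1 - u * w)⁻¹ * (1 - u * x)⁻¹)) := by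
        have h1 := hUx.ne
        have h2 := hUw.ne
        have hS' : S = (x - u ^ (m + 1) * x ^ (m + 1 + 1)) * (1 - u * x)⁻¹ := by
          rw [← hg, mul_inv_cancel_right₀ h1]
        have hi := mul_inv_cancel₀ h1
        have hj := mul_inv_cancel₀ h2
        rw [hS']
        linear_combination (-A * (x - u ^ (m + 1) * x ^ (m + 1 + 1)) * (1 - u * x)⁻¹) * hj +
          (A * w * (1 - u * w)⁻¹) * hi
      rw [hkey]
      have hy' : OrdGe 0 (x - w) := by
        have := OrdGe.sub (d := 0) (f := 0) (fun _ _ => rfl) hy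
        simpa using this
      have hR : OrdGe 0 (u ^ (m + 1) * x ^ (m + 1 + 1) * (1 - u * w)) :=
        (((huO.pow (m + 1)).mul (hxO.pow (m + 1 + 1))).mul hUw.ordGe).mono
          (by push_cast; nlinarith)
      exact (hAO.mul ((hy'.sub hR).mul (hUw.inv.mul hUx.inv))).mono (by simp)

/-- With `M_n(ζ) = (α_n, β_n; γ_n, δ_n)`: the constant term of `δ_n` equals `1` (so `δ_n` is
invertible in the field of formal Laurent series), and `x⁽ⁿ⁾(ζ₁, …, ζ_n)` equals the singular
part of `δ_n⁻¹ β_n`. -/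
theorem stmt7 (n : ℕ) (hn : 1 ≤ n) (ζ : ℕ → ℂ) :
    ((Mmat ζ n) 1 1).coeff 0 = 1 ∧
    xrec ζ n = singPart (((Mmat ζ n) 1 1)⁻¹ * (Mmat ζ n) 0 1) := by
  exact ⟨(main_aux ζ n).2.1.coeff, (main_aux ζ n).2.2⟩
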